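/- In the setting of the previous statement (n ≥ 1, k ≥ 1, 1 ≤ l ≤ n, smooth coefficients A^{I_1…I_{l−λ}}_{i_1…i_λ} on ℝ^N, and Ψ = Σ_{λ=0}^{l} Σ_{i_1<…<i_λ} Σ_{I_1<…<I_{l−λ}} A^{I_1…I_{l−λ}}_{i_1…i_λ} dx_{i_1}∧…∧dx_{i_λ}∧dp_{I_1}∧…∧dp_{I_{l−λ}} on J^k(n,1) = ℝ^N), for any smooth z : ℝ^n → ℝ the pullback of Ψ along the k-jet section satisfies the identity (j^k z)*Ψ = Σ_{1 ≤ ν_1<…<ν_l ≤ n} [ Σ_{λ=0}^{l} Σ (over all splittings {ν_1,…,ν_l} = {i_1<…<i_λ} ⊔ {j_1<…<j_{l−λ}}) Σ_{I_1<…<I_{l−λ}} A^{I_1…I_{l−λ}}_{i_1…i_λ}(j^k z(x)) · Δ^{I_1…I_{l−λ}}_{j_1…j_{l−λ}}(ν_1,…,ν_l; z)(x) ] dx_{ν_1}∧…∧dx_{ν_l} as differential l-forms on ℝ^n. -/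

import Mathlib

/-!
An alternating `l`-form on `ℝ^n` is determined by its values at `(e_{ν_1},…,e_{ν_l})` with
`ν_1 < ⋯ < ν_l`, and these values are its coefficients (`alternating_expand`). It therefore
suffices to evaluate the pullback of each monomial `dx_{i_1}∧⋯∧dx_{i_λ}∧dp_{I_1}∧⋯∧dp_{I_{l-λ}}`
at such a family.

The pulled-back form `dx_i` has value `δ_{ij}` at `e_j`, and `dp_I` has value `∂_j ∂_I z`, which
is `∂_I ∂_j z` by symmetry of second derivatives (`dxF_fderiv_jetSec`, `dpF_fderiv_jetSec`). The
monomial is thus a determinant. If some `i_a` is not among the `ν`'s, one column vanishes.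
Otherwise, rearranging `(ν_1,…,ν_l)` into `(i_1,…,i_λ,j_1,…,j_{l-λ})` costs the factor `sgn(σ)`
and makes the matrix block triangular, with an identity block for the `i`'s and the matrix
`∂_{I_c} ∂_{j_r} z` (transposed) for the `j`'s; this is the content of `det_monomial`.
-/


noncomputable section
namespace GMAE

/-- first-order partial derivative in the direction `x_i` -/
noncomputable def pd {n : ℕ} (i : Fin n) (f : (Fin n → ℝ) → ℝ) : (Fin n → ℝ) → ℝ :=
  fun x => fderiv ℝ f x (Pi.single i 1)

/-- iterated partial derivative along a list of coordinate directions -/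
noncomputable def pdList {n : ℕ} : List (Fin n) → ((Fin n → ℝ) → ℝ) → ((Fin n → ℝ) → ℝ)
  | [], f => f
  | i :: L, f => pdList L (pd i f)

/-- iterated partial derivative `∂_I` along a multiset of directions -/
noncomputable def pdM {n : ℕ} (I : Multiset (Fin n)) (f : (Fin n → ℝ) → ℝ) : (Fin n → ℝ) → ℝ :=
  pdList I.toList f

/-- `Σ_k`: symmetric multi-indices of length `1,…,k`; the component `j` consists of
the multi-indices of length `k - j`. -/
abbrev SigIdx (n k : ℕ) := Σ j : Fin k, Sym (Fin n) (k - j.val)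

/-- the inclusion of `S_k` (multi-indices of length exactly `k`) into `Σ_k` -/
def topIdx {n k : ℕ} (hk : 0 < k) (I : Sym (Fin n) k) : SigIdx n k := ⟨⟨0, hk⟩, I⟩

/-- the underlying multiset of a multi-index in `Σ_k` -/
def SigIdx.toMultiset {n k : ℕ} (p : SigIdx n k) : Multiset (Fin n) := ↑p.2

/-- index set for the coordinates `(x_i, z^α, p^α_I)` of the jet space `J^k(n,m)` -/
abbrev JIdx (n m k : ℕ) := Fin n ⊕ Fin m ⊕ (Fin m × SigIdx n k)

/-- the `k`-jet space `J^k(n,m) = ℝ^N`, `N = n + m + m⬝|Σ_k|` -/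
abbrev Jet (n m k : ℕ) := JIdx n m k → ℝ

/-- the coordinate `1`-form `dx_i` -/
def dxF {n m k : ℕ} (i : Fin n) : Jet n m k →ₗ[ℝ] ℝ := LinearMap.proj (Sum.inl i)
/-- the coordinate `1`-form `dz^α` -/
def dzF {n m k : ℕ} (α : Fin m) : Jet n m k →ₗ[ℝ] ℝ := LinearMap.proj (Sum.inr (Sum.inl α))
/-- the coordinate `1`-form `dp^α_I` -/
def dpF {n m k : ℕ} (α : Fin m) (I : SigIdx n k) : Jet n m k →ₗ[ℝ] ℝ :=
  LinearMap.proj (Sum.inr (Sum.inr (α, I)))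

/-- the `k`-jet section of `z = (z^1,…,z^m)` -/
noncomputable def jetSec {n m k : ℕ} (z : Fin m → (Fin n → ℝ) → ℝ) (x : Fin n → ℝ) :
    Jet n m k :=
  Sum.elim x (Sum.elim (fun α => z α x) fun p => pdM (SigIdx.toMultiset p.2) (z p.1) x)

/-- the singleton multi-index `(i)` as an element of `Σ_k` -/
def singIdx {n k : ℕ} (hk : 0 < k) (i : Fin n) : SigIdx n k :=
  ⟨⟨k - 1, by omega⟩, Sym.cast (show 1 = k - (k-1) by omega) (Sym.replicate 1 i)⟩

/-- `Ii`: the multi-index `I ∈ Σ_{k-1} ⊆ Σ_k` with `i` added, an element of `Σ_k` -/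
def consIdx {n k : ℕ} (p : SigIdx n k) (hp : 1 ≤ p.1.val) (i : Fin n) : SigIdx n k :=
  ⟨⟨p.1.val - 1, by omega⟩,
    Sym.cast (show (k - p.1.val) + 1 = k - (p.1.val - 1) by omega) (i ::ₛ p.2)⟩

/-- the contact `1`-form `ω^α_0 = dz^α - Σ_i p^α_i dx_i` at the point `u` -/
noncomputable def contact0 {n m k : ℕ} (hk : 0 < k) (α : Fin m) (u : Jet n m k) :
    Jet n m k →ₗ[ℝ] ℝ :=
  dzF α - ∑ i, u (Sum.inr (Sum.inr (α, singIdx hk i))) • dxF i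

/-- the contact `1`-form `ω^α_I = dp^α_I - Σ_i p^α_{Ii} dx_i`, for `I ∈ Σ_{k-1}`,
at the point `u` -/
noncomputable def contactP {n m k : ℕ} (α : Fin m) (p : SigIdx n k) (hp : 1 ≤ p.1.val)
    (u : Jet n m k) : Jet n m k →ₗ[ℝ] ℝ :=
  dpF α p - ∑ i, u (Sum.inr (Sum.inr (α, consIdx p hp i))) • dxF i

/-- the wedge product `θ_1 ∧ ⋯ ∧ θ_l` of `1`-forms, `(w_1,…,w_l) ↦ det (θ_a (w_b))` -/
noncomputable def wedge {E : Type*} [AddCommGroup E] [Module ℝ E] {l : ℕ}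
    (θ : Fin l → (E →ₗ[ℝ] ℝ)) : E [⋀^Fin l]→ₗ[ℝ] ℝ :=
  Matrix.detRowAlternating.compLinearMap (LinearMap.pi θ)

/-- pullback of a differential `l`-form along a map `ι` -/
noncomputable def pullback {E F : Type*} [NormedAddCommGroup E] [NormedSpace ℝ E]
    [NormedAddCommGroup F] [NormedSpace ℝ F] {l : ℕ}
    (ι : E → F) (Ψ : F → (F [⋀^Fin l]→ₗ[ℝ] ℝ)) (x : E) : E [⋀^Fin l]→ₗ[ℝ] ℝ :=
  (Ψ (ι x)).compLinearMap (fderiv ℝ ι x).toLinearMap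

end GMAE

namespace GMAE

variable {n k : ℕ} [LinearOrder (Sym (Fin n) k)]

/-- the ordered list of `1`-forms `dx_{i_1},…,dx_{i_λ},dp_{I_1},…,dp_{I_{l-λ}}` of a
monomial of `Ψ`, determined by the set `s` of the `i`'s and the set `T` of the `I`'s
(each listed in increasing order). -/
noncomputable def formList1 (hk : 0 < k) (s : Finset (Fin n))
    (T : Finset (Sym (Fin n) k)) : List (Jet n 1 k →ₗ[ℝ] ℝ) :=
  (s.sort (· ≤ ·)).map dxF ++ (T.sort (· ≤ ·)).map fun I => dpF 0 (topIdx hk I)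

/-- the `l`-form `Ψ = Σ A^{I_1…I_{l-λ}}_{i_1…i_λ} dx_{i_1}∧⋯∧dx_{i_λ}∧dp_{I_1}∧⋯∧dp_{I_{l-λ}}`
on `J^k(n,1)` with coefficients `A` -/
noncomputable def Psi1 (hk : 0 < k)
    (A : Finset (Fin n) → Finset (Sym (Fin n) k) → Jet n 1 k → ℝ) (l : ℕ)
    (u : Jet n 1 k) : (Jet n 1 k) [⋀^Fin l]→ₗ[ℝ] ℝ :=
  ∑ s : Finset (Fin n), ∑ T : Finset (Sym (Fin n) k),
    if h : (formList1 hk s T).length = l then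
      A s T u • wedge (fun a => (formList1 hk s T).get (Fin.cast h.symm a))
    else 0

/-- the tuple `(i_1,…,i_λ, j_1,…,j_{l-λ})` obtained from the splitting
`{ν_1,…,ν_l} = {i_1<…<i_λ} ⊔ {j_1<…<j_{l-λ}}` determined by the subset `s` (the `i`'s)
of the image of `ν`. -/
noncomputable def splitTuple {l : ℕ} (ν : Fin l → Fin n) (s : Finset (Fin n))
    (a : Fin l) : Fin n :=
  if h : a.val < s.card then s.orderIsoOfFin rfl ⟨a.val, h⟩
  else if h2 : a.val - s.card < ((Finset.image ν Finset.univ) \ s).card then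
    ((Finset.image ν Finset.univ) \ s).orderIsoOfFin rfl ⟨a.val - s.card, h2⟩
  else ν a

/-- `sgn(σ)`, where `σ` is the permutation rearranging `(ν_1,…,ν_l)` into
`(i_1,…,i_λ, j_1,…,j_{l-λ})`: the determinant of the permutation matrix of `σ`. -/
noncomputable def splitSign {l : ℕ} (ν : Fin l → Fin n) (s : Finset (Fin n)) : ℝ :=
  Matrix.det (Matrix.of fun a b => if ν b = splitTuple ν s a then (1 : ℝ) else 0)

/-- `Δ^{I_1…I_{l-λ}}_{j_1…j_{l-λ}}(ν_1,…,ν_l; z) = sgn(σ)·det(∂_{I_c}∂_{x_{j_r}} z)`,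
where the `j`'s are the complement of `s` in the image of `ν` (in increasing order)
and the `I`'s are the elements of `T` (in increasing order). -/
noncomputable def Delta1 {l : ℕ} (z : (Fin n → ℝ) → ℝ) (ν : Fin l → Fin n)
    (s : Finset (Fin n)) (T : Finset (Sym (Fin n) k)) (x : Fin n → ℝ) : ℝ :=
  splitSign ν s *
    Matrix.det (Matrix.of fun (r c : Fin (T.sort (· ≤ ·)).length) =>
      if h : r.val < ((Finset.image ν Finset.univ) \ s).card then
        pdM (((T.sort (· ≤ ·)).get c : Sym (Fin n) k) : Multiset (Fin n))
          (pd (((Finset.image ν Finset.univ) \ s).orderIsoOfFin rfl ⟨r.val, h⟩) z) x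
      else 0)

/-- the left-hand side of the generalized Monge–Ampère equation indexed by
`ν = (ν_1 < … < ν_l)`, evaluated at `x` -/
noncomputable def gmaeLHS1
    (A : Finset (Fin n) → Finset (Sym (Fin n) k) → Jet n 1 k → ℝ) {l : ℕ}
    (z : (Fin n → ℝ) → ℝ) (ν : Fin l → Fin n) (x : Fin n → ℝ) : ℝ :=
  ∑ s ∈ (Finset.image ν Finset.univ).powerset, ∑ T : Finset (Sym (Fin n) k),
    if s.card + T.card = l then
      A s T (jetSec (fun _ : Fin 1 => z) x) * Delta1 z ν s T x
    else 0

end GMAE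

namespace GMAE

/-! ### Symmetry of iterated partial derivatives -/

lemma contDiff_pd {n : ℕ} (i : Fin n) {f : (Fin n → ℝ) → ℝ} (hf : ContDiff ℝ (⊤ : ℕ∞) f) :
    ContDiff ℝ (⊤ : ℕ∞) (pd i f) :=
  (hf.fderiv_right (m := (⊤ : ℕ∞)) (by simp)).clm_apply contDiff_const

lemma contDiff_pdList {n : ℕ} (L : List (Fin n)) {f : (Fin n → ℝ) → ℝ}
    (hf : ContDiff ℝ (⊤ : ℕ∞) f) : ContDiff ℝ (⊤ : ℕ∞) (pdList L f) := by
  induction L generalizing f with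
  | nil => exact hf
  | cons i L ih => exact ih (contDiff_pd i hf)

lemma pd_comm {n : ℕ} (i j : Fin n) {f : (Fin n → ℝ) → ℝ} (hf : ContDiff ℝ (⊤ : ℕ∞) f) :
    pd i (pd j f) = pd j (pd i f) := by
  have hd : Differentiable ℝ (fderiv ℝ f) :=
    (hf.fderiv_right (m := (⊤ : ℕ∞)) (by simp)).differentiable (by simp)
  have key : ∀ a b : Fin n, ∀ x, pd a (pd b f) x =
      fderiv ℝ (fderiv ℝ f) x (Pi.single a 1) (Pi.single b 1) := by
    intro a b x
    unfold pd
    rw [fderiv_clm_apply (hd x) (differentiableAt_const _)]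
    simp
  ext x
  rw [key, key]
  have hs : IsSymmSndFDerivAt ℝ f x :=
    hf.contDiffAt.isSymmSndFDerivAt (by
      rw [minSmoothness_of_isRCLikeNormedField]
      exact WithTop.coe_le_coe.2 (le_top : (2 : ℕ∞) ≤ ⊤))
  exact hs _ _

lemma pd_pdList {n : ℕ} (i : Fin n) (L : List (Fin n)) {f : (Fin n → ℝ) → ℝ}
    (hf : ContDiff ℝ (⊤ : ℕ∞) f) : pd i (pdList L f) = pdList L (pd i f) := by
  induction L generalizing f with
  | nil => rfl
  | cons j L ih =>
    change pd i (pdList L (pd j f)) = pdList L (pd j (pd i f))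
    rw [ih (contDiff_pd j hf), pd_comm i j hf]

/-! ### The differential of the jet section -/

lemma differentiableAt_jetSec {n k : ℕ} {z : (Fin n → ℝ) → ℝ}
    (hz : ContDiff ℝ (⊤ : ℕ∞) z) (x : Fin n → ℝ) :
    DifferentiableAt ℝ (jetSec (k := k) fun _ : Fin 1 => z) x := by
  rw [differentiableAt_pi]
  rintro (i | α | ⟨α, p⟩)
  · exact differentiableAt_apply i x
  · exact (hz.differentiable (by simp)) x
  · exact ((contDiff_pdList _ hz).differentiable (by simp)) x

lemma fderiv_jetSec_apply {n k : ℕ} {z : (Fin n → ℝ) → ℝ}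
    (hz : ContDiff ℝ (⊤ : ℕ∞) z) (x v : Fin n → ℝ) (c : JIdx n 1 k) :
    fderiv ℝ (jetSec (k := k) fun _ : Fin 1 => z) x v c =
      fderiv ℝ (fun y => jetSec (k := k) (fun _ : Fin 1 => z) y c) x v := by
  rw [fderiv_apply (differentiableAt_jetSec hz x) c]
  rfl

lemma dxF_fderiv_jetSec {n k : ℕ} {z : (Fin n → ℝ) → ℝ}
    (hz : ContDiff ℝ (⊤ : ℕ∞) z) (x : Fin n → ℝ) (i j : Fin n) :
    dxF i (fderiv ℝ (jetSec (k := k) fun _ : Fin 1 => z) x (Pi.single j 1)) =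
      if i = j then 1 else 0 := by
  change fderiv ℝ (jetSec (k := k) fun _ : Fin 1 => z) x (Pi.single j 1) (Sum.inl i) = _
  rw [fderiv_jetSec_apply hz]
  change fderiv ℝ (fun y : Fin n → ℝ => y i) x (Pi.single j 1) = _
  have : fderiv ℝ (fun y : Fin n → ℝ => y i) x = ContinuousLinearMap.proj i :=
    (ContinuousLinearMap.proj (R := ℝ) (φ := fun _ : Fin n => ℝ) i).fderiv
  rw [this]
  simp [Pi.single_apply]

/-- The `dp_I`-component of the jet section's differential, with the order of differentiation
exchanged so that `∂_I` comes last, as in `Delta1`. -/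
lemma dpF_fderiv_jetSec {n k : ℕ} (hk : 0 < k) {z : (Fin n → ℝ) → ℝ}
    (hz : ContDiff ℝ (⊤ : ℕ∞) z) (x : Fin n → ℝ) (I : Sym (Fin n) k) (j : Fin n) :
    dpF 0 (topIdx hk I) (fderiv ℝ (jetSec (k := k) fun _ : Fin 1 => z) x (Pi.single j 1)) =
      pdM (I : Multiset (Fin n)) (pd j z) x := by
  change fderiv ℝ (jetSec (k := k) fun _ : Fin 1 => z) x (Pi.single j 1)
    (Sum.inr (Sum.inr (0, topIdx hk I))) = _
  rw [fderiv_jetSec_apply hz]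
  exact congrFun (pd_pdList j (I : Multiset (Fin n)).toList hz) x

/-! ### Alternating forms in the standard basis -/

lemma wedge_apply {E : Type*} [AddCommGroup E] [Module ℝ E] {l : ℕ}
    (θ : Fin l → (E →ₗ[ℝ] ℝ)) (w : Fin l → E) :
    wedge θ w = Matrix.det (Matrix.of fun b a => θ a (w b)) := rfl

lemma alternating_sum_apply {E ι : Type*} [AddCommGroup E] [Module ℝ E] {l : ℕ}
    (S : Finset ι) (f : ι → E [⋀^Fin l]→ₗ[ℝ] ℝ) (w : Fin l → E) :
    (∑ i ∈ S, f i) w = ∑ i ∈ S, f i w := by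
  classical
  induction S using Finset.induction_on with
  | empty => simp
  | insert a S ha ih => rw [Finset.sum_insert ha, Finset.sum_insert ha, ← ih]; rfl

/-- An alternating `l`-form on `ℝ^n` is the combination of the `dx_{ν_1}∧⋯∧dx_{ν_l}` whose
coefficients are its values at `(e_{ν_1},…,e_{ν_l})`, `ν_1 < ⋯ < ν_l`. -/
lemma alternating_expand {n l : ℕ} (g : (Fin n → ℝ) [⋀^Fin l]→ₗ[ℝ] ℝ) :
    g = ∑ V : Finset (Fin n),
        if h : V.card = l then
          g (fun a => Pi.single (V.orderIsoOfFin h a : Fin n) 1) •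
            wedge (fun a =>
              (LinearMap.proj (V.orderIsoOfFin h a : Fin n) : (Fin n → ℝ) →ₗ[ℝ] ℝ))
        else 0 := by
  refine Module.Basis.ext_alternating (Pi.basisFun ℝ (Fin n)) fun v hv => ?_
  simp only [Pi.basisFun_apply]
  have hc : (Finset.univ.image v).card = l := by
    rw [Finset.card_image_of_injective _ hv]; simp
  rw [alternating_sum_apply, Finset.sum_eq_single (Finset.univ.image v)]
  · rw [dif_pos hc]
    set V := Finset.univ.image v with hV
    have hmem : ∀ b, v b ∈ V := fun b => Finset.mem_image_of_mem _ (Finset.mem_univ _)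
    let t : Fin l → Fin l := fun b => (V.orderIsoOfFin hc).symm ⟨v b, hmem b⟩
    have ht : Function.Injective t := fun a b hab => by
      have := (V.orderIsoOfFin hc).symm.injective hab
      exact hv (congrArg Subtype.val this)
    let τ : Equiv.Perm (Fin l) := Equiv.ofBijective t (Finite.injective_iff_bijective.1 ht)
    have hτ : (fun b => (Pi.single (v b) 1 : Fin n → ℝ)) =
        (fun a => Pi.single (V.orderIsoOfFin hc a : Fin n) (1 : ℝ)) ∘ τ := by
      funext b
      have : ((V.orderIsoOfFin hc (τ b) : V) : Fin n) = v b := by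
        change ((V.orderIsoOfFin hc ((V.orderIsoOfFin hc).symm ⟨v b, hmem b⟩) : V) : Fin n) = v b
        rw [OrderIso.apply_symm_apply]
      simp only [Function.comp_apply, this]
    rw [hτ, AlternatingMap.map_perm, AlternatingMap.map_perm, AlternatingMap.smul_apply,
      wedge_apply]
    have h1 : (Matrix.of fun b a : Fin l =>
        (LinearMap.proj (V.orderIsoOfFin hc a : Fin n) : (Fin n → ℝ) →ₗ[ℝ] ℝ)
          (Pi.single (V.orderIsoOfFin hc b : Fin n) (1 : ℝ))) = 1 := by
      ext b a
      simp [Pi.single_apply, Matrix.one_apply, eq_comm]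
    rw [h1, Matrix.det_one, smul_eq_mul, mul_one]
  · intro V _ hne
    split_ifs with h
    · -- `V` has as many elements as `image v`, hence one outside it: a zero column.
      obtain ⟨y, hyV, hy⟩ : ∃ y ∈ V, y ∉ Finset.univ.image v := by
        by_contra! hcon
        exact hne (Finset.eq_of_subset_of_card_le hcon (by rw [h, hc]))
      rw [AlternatingMap.smul_apply, wedge_apply,
        Matrix.det_eq_zero_of_column_eq_zero ((V.orderIsoOfFin h).symm ⟨y, hyV⟩), smul_zero]
      intro b
      have : y ≠ v b := fun e => hy (e ▸ Finset.mem_image_of_mem _ (Finset.mem_univ _))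
      rw [Matrix.of_apply, OrderIso.apply_symm_apply]
      simp [this]
    · rfl
  · intro h; exact absurd (Finset.mem_univ _) h

/-! ### Monomials evaluated on increasing families -/

section Monomial

variable {n k : ℕ} [LinearOrder (Sym (Fin n) k)]

lemma formList1_length (hk : 0 < k) (s : Finset (Fin n)) (T : Finset (Sym (Fin n) k)) :
    (formList1 hk s T).length = s.card + (T.sort (· ≤ ·)).length := by
  simp [formList1]

lemma formList1_get_left (hk : 0 < k) (s : Finset (Fin n)) (T : Finset (Sym (Fin n) k))
    (i : Fin s.card) (j : Fin (formList1 hk s T).length) (hj : j.val = i.val) :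
    (formList1 hk s T).get j = dxF (s.orderIsoOfFin rfl i : Fin n) := by
  obtain ⟨j, hj'⟩ := j
  obtain rfl : j = i.val := hj
  simp only [List.get_eq_getElem, formList1]
  rw [List.getElem_append_left (by simp), List.getElem_map, Finset.coe_orderIsoOfFin_apply,
    Finset.orderEmbOfFin_apply]
  rfl

lemma formList1_get_right (hk : 0 < k) (s : Finset (Fin n)) (T : Finset (Sym (Fin n) k))
    (c : Fin (T.sort (· ≤ ·)).length) (j : Fin (formList1 hk s T).length)
    (hj : j.val = s.card + c.val) :
    (formList1 hk s T).get j = dpF 0 (topIdx hk ((T.sort (· ≤ ·)).get c)) := by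
  obtain ⟨j, hj'⟩ := j
  obtain rfl : j = s.card + c.val := hj
  simp only [List.get_eq_getElem, formList1]
  rw [List.getElem_append_right (by simp), List.getElem_map]
  simp

/-- The monomial `dx_{i_1}∧⋯∧dp_{I_{l-λ}}`, pulled back by the jet section and evaluated at
`(e_{ν_1},…,e_{ν_l})`. Factoring its matrix through the rearrangement `splitTuple` turns the
determinant into `sgn(σ)` times a block-triangular one with an identity block. -/
lemma det_monomial {l : ℕ} (hk : 0 < k) {z : (Fin n → ℝ) → ℝ} (hz : ContDiff ℝ (⊤ : ℕ∞) z)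
    (x : Fin n → ℝ) (ν : Fin l → Fin n) (hν : Function.Injective ν) (s : Finset (Fin n))
    (T : Finset (Sym (Fin n) k)) (h : (formList1 hk s T).length = l) :
    Matrix.det (Matrix.of fun b a : Fin l => (formList1 hk s T).get (Fin.cast h.symm a)
        (fderiv ℝ (jetSec (k := k) fun _ : Fin 1 => z) x (Pi.single (ν b) 1))) =
      if s ⊆ Finset.image ν Finset.univ then Delta1 z ν s T x else 0 := by
  have hl : s.card + (T.sort (· ≤ ·)).length = l := by rw [← formList1_length hk, h]
  let e : Fin s.card ⊕ Fin (T.sort (· ≤ ·)).length ≃ Fin l :=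
    finSumFinEquiv.trans (finCongr hl)
  have el : ∀ i, (e (Sum.inl i)).val = i.val := fun i => rfl
  have er : ∀ c, (e (Sum.inr c)).val = s.card + c.val := fun c => rfl
  have gl : ∀ i, (formList1 hk s T).get (Fin.cast h.symm (e (Sum.inl i))) =
      dxF (s.orderIsoOfFin rfl i : Fin n) := fun i => formList1_get_left hk s T i _ (el i)
  have gr : ∀ c, (formList1 hk s T).get (Fin.cast h.symm (e (Sum.inr c))) =
      dpF 0 (topIdx hk ((T.sort (· ≤ ·)).get c)) :=
    fun c => formList1_get_right hk s T c _ (er c)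
  split_ifs with hs
  · have hcV : (Finset.image ν Finset.univ \ s).card = (T.sort (· ≤ ·)).length := by
      rw [Finset.card_sdiff_of_subset hs, Finset.card_image_of_injective _ hν]
      simp only [Finset.card_univ, Fintype.card_fin]
      omega
    have sl : ∀ i, splitTuple ν s (e (Sum.inl i)) = s.orderIsoOfFin rfl i := by
      intro i
      rw [splitTuple, dif_pos (by rw [el]; exact i.2)]
      rfl
    have sr : ∀ c, splitTuple ν s (e (Sum.inr c)) =
        (Finset.image ν Finset.univ \ s).orderIsoOfFin rfl ⟨c.val, by rw [hcV]; exact c.2⟩ := by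
      intro c
      have h0 : (e (Sum.inr c)).val - s.card = c.val := by rw [er]; omega
      rw [splitTuple, dif_neg (by rw [er]; omega), dif_pos (by rw [h0, hcV]; exact c.2)]
      simp only [h0]
    have slm : ∀ i, splitTuple ν s (e (Sum.inl i)) ∈ s := fun i => by
      rw [sl]; exact Subtype.prop _
    have srm : ∀ c, splitTuple ν s (e (Sum.inr c)) ∈ Finset.image ν Finset.univ \ s :=
      fun c => by rw [sr]; exact Subtype.prop _
    have hinj : Function.Injective (splitTuple ν s) := by
      intro a b hab
      obtain ⟨a | a, rfl⟩ := e.surjective a <;> obtain ⟨b | b, rfl⟩ := e.surjective b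
      · rw [sl, sl] at hab
        rw [(s.orderIsoOfFin rfl).injective (Subtype.ext hab)]
      · exact absurd (hab ▸ slm a) (Finset.mem_sdiff.1 (srm b)).2
      · exact absurd (hab.symm ▸ slm b) (Finset.mem_sdiff.1 (srm a)).2
      · rw [sr, sr] at hab
        have := OrderIso.injective _ (Subtype.ext hab)
        rw [Fin.ext (Fin.mk.inj_iff.1 this)]
    have himg : ∀ a, splitTuple ν s a ∈ Finset.image ν Finset.univ := by
      intro a
      obtain ⟨a | a, rfl⟩ := e.surjective a
      · exact hs (slm a)
      · exact (Finset.mem_sdiff.1 (srm a)).1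
    have hsurj : ∀ b, ∃ c, splitTuple ν s c = ν b := by
      have : Finset.univ.image (splitTuple ν s) = Finset.univ.image ν := by
        refine Finset.eq_of_subset_of_card_le (fun y hy => ?_) ?_
        · obtain ⟨a, -, rfl⟩ := Finset.mem_image.1 hy
          exact himg a
        · rw [Finset.card_image_of_injective _ hν, Finset.card_image_of_injective _ hinj]
      intro b
      have hb : ν b ∈ Finset.univ.image (splitTuple ν s) := by
        rw [this]; exact Finset.mem_image_of_mem _ (Finset.mem_univ _)
      obtain ⟨c, -, hc⟩ := Finset.mem_image.1 hb
      exact ⟨c, hc⟩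
    let N : Matrix (Fin l) (Fin l) ℝ := Matrix.of fun a c =>
      (formList1 hk s T).get (Fin.cast h.symm a)
        (fderiv ℝ (jetSec (k := k) fun _ : Fin 1 => z) x (Pi.single (splitTuple ν s c) 1))
    let P : Matrix (Fin l) (Fin l) ℝ :=
      Matrix.of fun a b => if ν b = splitTuple ν s a then (1 : ℝ) else 0
    rw [← Matrix.det_transpose]
    have hfac : (Matrix.of fun b a : Fin l => (formList1 hk s T).get (Fin.cast h.symm a)
        (fderiv ℝ (jetSec (k := k) fun _ : Fin 1 => z) x (Pi.single (ν b) 1))).transpose =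
        N * P := by
      ext a b
      obtain ⟨c, hc⟩ := hsurj b
      rw [Matrix.mul_apply, Finset.sum_eq_single c]
      · simp [N, P, hc]
      · intro c' _ hne
        have : ν b ≠ splitTuple ν s c' := fun e' => hne (hinj (e'.symm.trans hc.symm))
        simp [P, this]
      · intro h'; exact absurd (Finset.mem_univ _) h'
    rw [hfac, Matrix.det_mul, mul_comm, Delta1]
    congr 1
    rw [← Matrix.det_submatrix_equiv_self e N, ← Matrix.fromBlocks_toBlocks (N.submatrix e e)]
    have h11 : (N.submatrix e e).toBlocks₁₁ = 1 := by
      ext i j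
      simp only [Matrix.toBlocks₁₁, Matrix.of_apply, Matrix.submatrix_apply, N]
      rw [gl, sl, dxF_fderiv_jetSec hz]
      simp [Matrix.one_apply]
    have h12 : (N.submatrix e e).toBlocks₁₂ = 0 := by
      ext i j
      simp only [Matrix.toBlocks₁₂, Matrix.of_apply, Matrix.submatrix_apply, N]
      rw [gl, dxF_fderiv_jetSec hz, if_neg]
      · rfl
      · intro hij
        exact (Finset.mem_sdiff.1 (srm j)).2 (hij ▸ Subtype.prop _)
    rw [h12, Matrix.det_fromBlocks_zero₁₂, h11, Matrix.det_one, one_mul, ← Matrix.det_transpose]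
    congr 1
    ext r c
    simp only [Matrix.toBlocks₂₂, Matrix.transpose_apply, Matrix.of_apply,
      Matrix.submatrix_apply, N]
    rw [gr, sr, dpF_fderiv_jetSec hk hz, dif_pos (by rw [hcV]; exact r.2)]
  · obtain ⟨y, hys, hy⟩ := Finset.not_subset.1 hs
    refine Matrix.det_eq_zero_of_column_eq_zero
      (e (Sum.inl ((s.orderIsoOfFin rfl).symm ⟨y, hys⟩))) fun b => ?_
    rw [Matrix.of_apply, gl, dxF_fderiv_jetSec hz, if_neg]
    rw [OrderIso.apply_symm_apply]
    exact fun e' => hy (Finset.mem_image.2 ⟨b, Finset.mem_univ _, e'.symm⟩)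

lemma pullback_Psi1_apply_single {l : ℕ} (hk : 0 < k)
    (A : Finset (Fin n) → Finset (Sym (Fin n) k) → Jet n 1 k → ℝ)
    {z : (Fin n → ℝ) → ℝ} (hz : ContDiff ℝ (⊤ : ℕ∞) z)
    (x : Fin n → ℝ) (ν : Fin l → Fin n) (hν : Function.Injective ν) :
    pullback (jetSec (k := k) fun _ : Fin 1 => z) (Psi1 hk A l) x
      (fun a => Pi.single (ν a) 1) = gmaeLHS1 A z ν x := by
  rw [pullback, AlternatingMap.compLinearMap_apply, Psi1, alternating_sum_apply, gmaeLHS1]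
  rw [← Finset.sum_subset (Finset.subset_univ (Finset.image ν Finset.univ).powerset)]
  · refine Finset.sum_congr rfl fun s hs => ?_
    rw [alternating_sum_apply]
    refine Finset.sum_congr rfl fun T _ => ?_
    have hlen := formList1_length hk s T
    rw [Finset.length_sort] at hlen
    by_cases h : (formList1 hk s T).length = l
    · rw [dif_pos h, if_pos (hlen ▸ h), AlternatingMap.smul_apply, wedge_apply]
      have := det_monomial hk hz x ν hν s T h
      rw [if_pos (Finset.mem_powerset.1 hs)] at this
      rw [← this]
      rfl
    · rw [dif_neg h, if_neg (hlen ▸ h)]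
      rfl
  · intro s _ hs
    rw [alternating_sum_apply]
    refine Finset.sum_eq_zero fun T _ => ?_
    by_cases h : (formList1 hk s T).length = l
    · rw [dif_pos h, AlternatingMap.smul_apply, wedge_apply]
      have := det_monomial hk hz x ν hν s T h
      rw [if_neg (fun h' => hs (Finset.mem_powerset.2 h'))] at this
      refine Eq.trans (congrArg _ this) (smul_zero _)
    · rw [dif_neg h]
      rfl

end Monomial

/-- The pullback of
`Ψ = Σ A^{I_1…I_{l-λ}}_{i_1…i_λ} dx_{i_1}∧⋯∧dx_{i_λ}∧dp_{I_1}∧⋯∧dp_{I_{l-λ}}`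
along the `k`-jet section of `z` equals
`Σ_{ν_1<…<ν_l} (Σ_λ Σ_{splittings} Σ_{I's} A·Δ) dx_{ν_1}∧⋯∧dx_{ν_l}`
as a differential `l`-form on `ℝ^n`. -/
theorem statement3 (n k l : ℕ) (hn : 1 ≤ n) (hk : 1 ≤ k) (hl1 : 1 ≤ l) (hln : l ≤ n)
    [LinearOrder (Sym (Fin n) k)]
    (A : Finset (Fin n) → Finset (Sym (Fin n) k) → Jet n 1 k → ℝ)
    (hA : ∀ s T, ContDiff ℝ (⊤ : ℕ∞) (A s T))
    (z : (Fin n → ℝ) → ℝ) (hz : ContDiff ℝ (⊤ : ℕ∞) z) :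
    ∀ x : Fin n → ℝ,
      pullback (jetSec (k := k) fun _ : Fin 1 => z) (Psi1 hk A l) x =
      ∑ V : Finset (Fin n),
        if h : V.card = l then
          gmaeLHS1 A z (fun a => (V.orderIsoOfFin h a : Fin n)) x •
            wedge (fun a =>
              (LinearMap.proj (V.orderIsoOfFin h a : Fin n) : (Fin n → ℝ) →ₗ[ℝ] ℝ))
        else 0 := by
  intro x
  refine (alternating_expand _).trans (Finset.sum_congr rfl fun V _ => ?_)
  split_ifs with h
  · rw [pullback_Psi1_apply_single hk A hz x (fun a => (V.orderIsoOfFin h a : Fin n))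
      fun a b hab => (V.orderIsoOfFin h).injective (Subtype.ext hab)]
  · rfl

end GMAE
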